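/- Lemma D.3, reverse direction (one-sided multiplicative Freedman bound). Let (F_t)_{t ≤ T} be a filtration and let (X_t)_{t ≤ T} be a sequence of random variables adapted to it with 0 ≤ X_t ≤ R almost surely for all t. Then for every ε > 0 and δ ∈ (0,1), with probability at least 1 − δ: Σ_{t=1}^T E[X_t | F_{t−1}] ≤ (1+ε) · Σ_{t=1}^T X_t + ((1+ε)^2·R/ε)·log(1/δ). -/

import Mathlib

open MeasureTheory Finset

/-!
If `c ≥ 0` and `exp (-l R) ≤ 1 - c R`, then by convexity `exp (-l x) ≤ 1 - c x` on all of `[0, R]`,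
so conditionally `E[exp (-l X) | m] ≤ 1 - c E[X | m] ≤ exp (-c E[X | m])`. Hence
`exp (∑ (c E[X_t | F_{t-1}] - l X_t))` is a supermartingale with expectation at most `1`, and
Markov's inequality bounds the sum in the exponent by `log (1 / δ)` with probability at least
`1 - δ`. The choice `l = ε / R` and `c = ε / ((1 + ε) R)` satisfies both conditions, and dividing
by `c` turns `l` into `1 + ε` and `log (1 / δ)` into `((1 + ε) R / ε) log (1 / δ)`.
-/

theorem exp_neg_mul_le_one_sub_mul {c l R x : ℝ} (hcl : Real.exp (-(l * R)) ≤ 1 - c * R)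
    (hx : x ∈ Set.Icc 0 R) : Real.exp (-(l * x)) ≤ 1 - c * x := by
  have hconvex : ConvexOn ℝ Set.univ fun y => Real.exp (-(l * y)) + c * y :=
    ((convexOn_exp.comp_linearMap (LinearMap.mulLeft ℝ (-l))).add
      ((LinearMap.mulLeft ℝ c).convexOn convex_univ)).congr fun y _ => by simp
  have hmax := hconvex.le_max_of_mem_Icc (Set.mem_univ 0) (Set.mem_univ R) hx
  have hends : max (Real.exp (-(l * 0)) + c * 0) (Real.exp (-(l * R)) + c * R) ≤ 1 :=
    max_le (by simp) (by linarith)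
  linarith

theorem exp_neg_le_one_sub_div_one_add {ε : ℝ} (hε : 0 ≤ ε) :
    Real.exp (-ε) ≤ 1 - ε / (1 + ε) := by
  calc Real.exp (-ε) = (Real.exp ε)⁻¹ := Real.exp_neg ε
    _ ≤ (1 + ε)⁻¹ := by
        gcongr
        linarith [Real.add_one_le_exp ε]
    _ = 1 - ε / (1 + ε) := by field_simp; ring

section Probability

variable {Ω : Type*} {m0 : MeasurableSpace Ω} {μ : Measure Ω}

section CondExp

variable {m : MeasurableSpace Ω} {Y : Ω → ℝ} {c l R : ℝ}

theorem condExp_le_exp_condExp [IsFiniteMeasure μ] {f g : Ω → ℝ} (hm : m ≤ m0)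
    (hf : Integrable f μ) (hg : Integrable g μ) (hfg : ∀ᵐ ω ∂μ, f ω ≤ 1 + g ω) :
    ∀ᵐ ω ∂μ, (μ[f | m]) ω ≤ Real.exp ((μ[g | m]) ω) := by
  have hone : Integrable (fun _ : Ω => (1 : ℝ)) μ := integrable_const 1
  filter_upwards [condExp_mono (m := m) hf (hone.add hg) hfg, condExp_add hone hg m]
    with ω hmono hadd
  calc (μ[f | m]) ω ≤ 1 + (μ[g | m]) ω := by simpa [hadd, condExp_const hm] using hmono
    _ ≤ Real.exp ((μ[g | m]) ω) := by linarith [Real.add_one_le_exp ((μ[g | m]) ω)]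

theorem integrable_exp_neg_mul [IsFiniteMeasure μ] (hl : 0 ≤ l) (hY : AEMeasurable Y μ)
    (hY0 : ∀ᵐ ω ∂μ, 0 ≤ Y ω) : Integrable (fun ω => Real.exp (-(l * Y ω))) μ := by
  simpa using ProbabilityTheory.integrable_exp_mul_of_le l 0 hl hY.neg
    (hY0.mono fun ω h => neg_nonpos.2 h)

theorem condExp_exp_neg_mul_le [IsFiniteMeasure μ] (hm : m ≤ m0) (hY : AEMeasurable Y μ)
    (hbd : ∀ᵐ ω ∂μ, Y ω ∈ Set.Icc 0 R) (hl : 0 ≤ l) (hcl : Real.exp (-(l * R)) ≤ 1 - c * R) :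
    ∀ᵐ ω ∂μ, (μ[fun ω => Real.exp (-(l * Y ω)) | m]) ω ≤ Real.exp (-(c * (μ[Y | m]) ω)) := by
  have hYint : Integrable Y μ := .of_mem_Icc 0 R hY hbd
  have hchord : ∀ᵐ ω ∂μ, Real.exp (-(l * Y ω)) ≤ 1 + ((-c) • Y) ω := by
    filter_upwards [hbd] with ω h
    simpa [← sub_eq_add_neg] using exp_neg_mul_le_one_sub_mul hcl h
  filter_upwards [condExp_le_exp_condExp hm (integrable_exp_neg_mul hl hY (hbd.mono fun _ h => h.1))
    (hYint.smul (-c)) hchord, condExp_smul (-c) Y m] with ω hle hsmul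
  rwa [hsmul, Pi.smul_apply, smul_eq_mul, neg_mul] at hle

end CondExp

theorem ofReal_one_sub_le_measure_le_log_one_div [IsProbabilityMeasure μ] {S : Ω → ℝ} {δ : ℝ}
    (hint : Integrable (fun ω => Real.exp (S ω)) μ) (hS : ∫ ω, Real.exp (S ω) ∂μ ≤ 1)
    (hδ : 0 < δ) : ENNReal.ofReal (1 - δ) ≤ μ {ω | S ω ≤ Real.log (1 / δ)} := by
  have htail : μ.real {ω | Real.log (1 / δ) ≤ S ω} ≤ δ := by
    calc μ.real {ω | Real.log (1 / δ) ≤ S ω}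
        ≤ Real.exp (-1 * Real.log (1 / δ)) * ProbabilityTheory.mgf S μ 1 :=
          ProbabilityTheory.measure_ge_le_exp_mul_mgf _ zero_le_one (by simpa using hint)
      _ = δ * ∫ ω, Real.exp (S ω) ∂μ := by simp [ProbabilityTheory.mgf, Real.exp_log hδ]
      _ ≤ δ := mul_le_of_le_one_right hδ.le hS
  have hcompl : {ω | S ω ≤ Real.log (1 / δ)}ᶜ ⊆ {ω | Real.log (1 / δ) ≤ S ω} :=
    fun ω hω => (not_le.1 (Set.notMem_ofPred_iff.1 hω)).le
  rw [ENNReal.ofReal_sub 1 hδ.le, ENNReal.ofReal_one, tsub_le_iff_right]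
  calc 1 = μ Set.univ := measure_univ.symm
    _ ≤ μ {ω | S ω ≤ Real.log (1 / δ)} + μ {ω | S ω ≤ Real.log (1 / δ)}ᶜ :=
        measure_univ_le_add_compl _
    _ ≤ μ {ω | S ω ≤ Real.log (1 / δ)} + ENNReal.ofReal δ := by
        gcongr
        exact (measure_mono hcompl).trans
          ((ENNReal.le_ofReal_iff_toReal_le (measure_ne_top _ _) hδ.le).2 htail)

section Supermartingale

variable {ℱ : Filtration ℕ m0} {Y K : ℕ → Ω → ℝ}

theorem stronglyAdapted_sum_range {E : Type*} [TopologicalSpace E] [AddCommMonoid E]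
    [ContinuousAdd E] {Z : ℕ → Ω → E} (hZ : ∀ n, StronglyMeasurable[ℱ (n + 1)] (Z n)) :
    StronglyAdapted ℱ fun n ω => ∑ t ∈ range n, Z t ω := fun _ =>
  Finset.stronglyMeasurable_fun_sum _ fun t ht => (hZ t).mono (ℱ.mono (mem_range.1 ht))

theorem supermartingale_exp_sum_sub [IsFiniteMeasure μ]
    (hY : ∀ n, StronglyMeasurable[ℱ (n + 1)] (Y n)) (hK : StronglyAdapted ℱ K)
    (hexpY : ∀ n, Integrable (fun ω => Real.exp (Y n ω)) μ)
    (hexp : ∀ n, Integrable (fun ω => Real.exp (∑ t ∈ range n, (Y t ω - K t ω))) μ)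
    (hle : ∀ n, ∀ᵐ ω ∂μ, (μ[fun ω => Real.exp (Y n ω) | ℱ n]) ω ≤ Real.exp (K n ω)) :
    Supermartingale (fun n ω => Real.exp (∑ t ∈ range n, (Y t ω - K t ω))) ℱ μ := by
  have hadapt : StronglyAdapted ℱ fun n ω => ∑ t ∈ range n, (Y t ω - K t ω) :=
    stronglyAdapted_sum_range fun n => (hY n).sub ((hK n).mono (ℱ.mono n.le_succ))
  refine supermartingale_nat
    (fun n => Real.continuous_exp.comp_stronglyMeasurable (hadapt n)) hexp fun n => ?_
  let A : Ω → ℝ := fun ω => Real.exp (∑ t ∈ range n, (Y t ω - K t ω) - K n ω)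
  have hA : StronglyMeasurable[ℱ n] A :=
    Real.continuous_exp.comp_stronglyMeasurable ((hadapt n).sub (hK n))
  have hsucc : (fun ω => Real.exp (∑ t ∈ range (n + 1), (Y t ω - K t ω))) =
      A * fun ω => Real.exp (Y n ω) := by
    ext ω
    simp only [A, Pi.mul_apply, ← Real.exp_add, sum_range_succ]
    ring_nf
  have hpull := condExp_mul_of_stronglyMeasurable_left hA (hsucc ▸ hexp (n + 1)) (hexpY n)
  filter_upwards [hle n, hpull] with ω hω hpullω
  calc (μ[fun ω => Real.exp (∑ t ∈ range (n + 1), (Y t ω - K t ω)) | ℱ n]) ω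
      = A ω * (μ[fun ω => Real.exp (Y n ω) | ℱ n]) ω := by rw [hsucc, hpullω, Pi.mul_apply]
    _ ≤ A ω * Real.exp (K n ω) := by gcongr
    _ = Real.exp (∑ t ∈ range n, (Y t ω - K t ω)) := by
        simp only [A, ← Real.exp_add, sub_add_cancel]

end Supermartingale

section Freedman

variable {ℱ : Filtration ℕ m0} {X : ℕ → Ω → ℝ} {c l R : ℝ}

theorem integrable_exp_sum_condExp_sub [IsFiniteMeasure μ]
    (hX : ∀ n, Measurable[ℱ (n + 1)] (X n)) (hbd : ∀ n, ∀ᵐ ω ∂μ, X n ω ∈ Set.Icc 0 R)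
    (hc : 0 ≤ c) (hl : 0 ≤ l) (n : ℕ) :
    Integrable (fun ω => Real.exp (∑ t ∈ range n, (c * (μ[X t | ℱ t]) ω - l * X t ω))) μ := by
  have hmeas (t : ℕ) : Measurable (X t) := (hX t).mono (ℱ.le _) le_rfl
  have hcond : ∀ᵐ ω ∂μ, ∀ t, (μ[X t | ℱ t]) ω ∈ Set.Icc 0 R :=
    ae_all_iff.2 fun t => (convex_Icc 0 R).condExp_mem (ℱ.le t)
      (.of_mem_Icc 0 R (hmeas t).aemeasurable (hbd t)) isClosed_Icc (hbd t)
  have hsum : ∀ᵐ ω ∂μ,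
      ∑ t ∈ range n, (c * (μ[X t | ℱ t]) ω - l * X t ω) ≤ n • (c * R) := by
    filter_upwards [ae_all_iff.2 hbd, hcond] with ω hω hcondω
    refine (sum_le_card_nsmul _ _ (c * R) fun t _ => ?_).trans_eq (by rw [card_range])
    linarith [mul_nonneg hl (hω t).1, mul_le_mul_of_nonneg_left (hcondω t).2 hc]
  have hmeas_condExp (t : ℕ) : Measurable (μ[X t | ℱ t]) :=
    (stronglyMeasurable_condExp.mono (ℱ.le t)).measurable
  simpa only [one_mul] using ProbabilityTheory.integrable_exp_mul_of_le 1 _ zero_le_one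
    (by fun_prop) hsum

theorem supermartingale_exp_sum_condExp_sub [IsFiniteMeasure μ]
    (hX : ∀ n, Measurable[ℱ (n + 1)] (X n)) (hbd : ∀ n, ∀ᵐ ω ∂μ, X n ω ∈ Set.Icc 0 R)
    (hc : 0 ≤ c) (hl : 0 ≤ l) (hcl : Real.exp (-(l * R)) ≤ 1 - c * R) :
    Supermartingale (fun n ω => Real.exp (∑ t ∈ range n,
      (c * (μ[X t | ℱ t]) ω - l * X t ω))) ℱ μ := by
  have hmeas (n : ℕ) : AEMeasurable (X n) μ := ((hX n).mono (ℱ.le _) le_rfl).aemeasurable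
  simpa only [neg_sub_neg] using supermartingale_exp_sum_sub
    (Y := fun n ω => -(l * X n ω)) (K := fun n ω => -(c * (μ[X n | ℱ n]) ω))
    (fun n => ((hX n).stronglyMeasurable.const_mul l).neg)
    (fun n => (stronglyMeasurable_condExp.const_mul c).neg)
    (fun n => integrable_exp_neg_mul hl (hmeas n) ((hbd n).mono fun _ h => h.1))
    (fun n => by simpa only [neg_sub_neg] using integrable_exp_sum_condExp_sub hX hbd hc hl n)
    (fun n => condExp_exp_neg_mul_le (ℱ.le n) (hmeas n) (hbd n) hl hcl)

theorem ofReal_one_sub_le_measure_sum_condExp_le [IsProbabilityMeasure μ] {δ : ℝ}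
    (hX : ∀ n, Measurable[ℱ (n + 1)] (X n)) (hbd : ∀ n, ∀ᵐ ω ∂μ, X n ω ∈ Set.Icc 0 R)
    (hc : 0 ≤ c) (hl : 0 ≤ l) (hcl : Real.exp (-(l * R)) ≤ 1 - c * R) (hδ : 0 < δ) (n : ℕ) :
    ENNReal.ofReal (1 - δ) ≤ μ {ω | c * ∑ t ∈ range n, (μ[X t | ℱ t]) ω ≤
      l * ∑ t ∈ range n, X t ω + Real.log (1 / δ)} := by
  have hsuper := supermartingale_exp_sum_condExp_sub hX hbd hc hl hcl
  have hmean : ∫ ω, Real.exp (∑ t ∈ range n, (c * (μ[X t | ℱ t]) ω - l * X t ω)) ∂μ ≤ 1 := by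
    simpa using hsuper.setIntegral_le n.zero_le MeasurableSet.univ
  refine (ofReal_one_sub_le_measure_le_log_one_div (hsuper.integrable n) hmean hδ).trans
    (measure_mono fun ω hω => ?_)
  simp only [Set.mem_ofPred_eq, sum_sub_distrib, ← mul_sum] at hω ⊢
  linarith

theorem freedman_one_sided_reverse_general [IsProbabilityMeasure μ] {ε δ : ℝ}
    (hX : Adapted ℱ X) (hbd : ∀ t, ∀ᵐ ω ∂μ, X t ω ∈ Set.Icc 0 R)
    (hR : 0 < R) (hε : 0 < ε) (hδ : 0 < δ) (n : ℕ) :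
    ENNReal.ofReal (1 - δ) ≤ μ {ω | ∑ t ∈ Icc 1 n, (μ[X t | ℱ (t - 1)]) ω ≤
      (1 + ε) * ∑ t ∈ Icc 1 n, X t ω + (1 + ε) * R / ε * Real.log (1 / δ)} := by
  have hcl : Real.exp (-(ε / R * R)) ≤ 1 - ε / ((1 + ε) * R) * R := by
    convert exp_neg_le_one_sub_div_one_add hε.le using 2 <;> field_simp
  have hshift (f : ℕ → ℝ) : ∑ t ∈ Icc 1 n, f t = ∑ t ∈ range n, f (t + 1) := by
    rw [range_eq_Ico, sum_Ico_add' f 0 n 1, zero_add, Ico_add_one_right_eq_Icc]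
  refine (ofReal_one_sub_le_measure_sum_condExp_le (X := fun t => X (t + 1))
    (fun t => hX (t + 1)) (fun t => hbd (t + 1)) (by positivity) (by positivity)
    hcl hδ n).trans (measure_mono fun ω hω => ?_)
  simp only [Set.mem_ofPred_eq, hshift, Nat.add_sub_cancel] at hω ⊢
  calc ∑ t ∈ range n, (μ[X (t + 1) | ℱ t]) ω
      = (1 + ε) * R / ε * (ε / ((1 + ε) * R) * ∑ t ∈ range n, (μ[X (t + 1) | ℱ t]) ω) := by
        field_simp
    _ ≤ (1 + ε) * R / ε * (ε / R * ∑ t ∈ range n, X (t + 1) ω + Real.log (1 / δ)) := by gcongr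
    _ = (1 + ε) * ∑ t ∈ range n, X (t + 1) ω + (1 + ε) * R / ε * Real.log (1 / δ) := by
        field_simp

end Freedman

end Probability

/-- Lemma D.3, reverse direction (one-sided multiplicative Freedman bound):
for an adapted sequence with `0 ≤ X_t ≤ R` a.s., with probability at least `1 − δ`,
`Σ_{t=1}^T E[X_t | F_{t−1}] ≤ (1+ε)·Σ_{t=1}^T X_t + ((1+ε)²R/ε)·log(1/δ)`. -/
theorem freedman_one_sided_reverse {Ω : Type*} {m0 : MeasurableSpace Ω}
    (μ : Measure Ω) [IsProbabilityMeasure μ]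
    (ℱ : Filtration ℕ m0) (T : ℕ)
    (X : ℕ → Ω → ℝ) (hadapt : Adapted ℱ X)
    (R : ℝ) (hR : 0 < R)
    (hbd : ∀ t, ∀ᵐ ω ∂μ, 0 ≤ X t ω ∧ X t ω ≤ R)
    (ε : ℝ) (hε0 : 0 < ε)
    (δ : ℝ) (hδ0 : 0 < δ) (hδ1 : δ < 1) :
    ENNReal.ofReal (1 - δ) ≤
      μ {ω | ∑ t ∈ Finset.Icc 1 T, (μ[X t | ℱ (t - 1)]) ω ≤
        (1 + ε) * ∑ t ∈ Finset.Icc 1 T, X t ω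
          + ((1 + ε) ^ 2 * R / ε) * Real.log (1 / δ)} := by
  have hlog : 0 ≤ Real.log (1 / δ) := Real.log_nonneg (one_le_one_div hδ0 hδ1.le)
  refine (freedman_one_sided_reverse_general hadapt hbd hR hε0 hδ0 T).trans
    (measure_mono (Set.ofPred_subset_ofPred.2 fun ω hω => hω.trans ?_))
  gcongr
  exact le_self_pow₀ (by linarith) two_ne_zero
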